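/- Let Γ=(V,E) be a connected cubic graph of order n that has a global independent offensive alliance. Then γ_i(Γ) = 2n/5 if and only if there exists an independent set X ⊆ V such that the subgraph induced by V∖X is a 1-factor of size 3n/10 (i.e., every vertex of V∖X has exactly one neighbor in V∖X, so the induced subgraph is a perfect matching on V∖X consisting of 3n/10 edges). Here γ_i(Γ) is the global independent offensive alliance number of Γ. -/

import Mathlib

/-- A nonempty set `S` of vertices is a *global offensive alliance* if every vertex
outside `S` has strictly more neighbors inside `S` than outside `S`. -/
def SimpleGraph.IsGlobalOffensiveAlliance {V : Type*} (G : SimpleGraph V) (S : Set V) : Prop :=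
  S.Nonempty ∧ ∀ v ∉ S, (G.neighborSet v \ S).ncard + 1 ≤ (G.neighborSet v ∩ S).ncard

/-- The *global offensive alliance number*: the minimum cardinality of a global offensive
alliance. -/
noncomputable def SimpleGraph.globalOffensiveAllianceNum {V : Type*} (G : SimpleGraph V) : ℕ :=
  sInf {k | ∃ S : Set V, G.IsGlobalOffensiveAlliance S ∧ S.ncard = k}

/-- A set of vertices is *independent* if its elements are pairwise nonadjacent. -/
def SimpleGraph.IsIndepVertexSet {V : Type*} (G : SimpleGraph V) (S : Set V) : Prop :=
  S.Pairwise fun u v => ¬ G.Adj u v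

/-- The *global independent offensive alliance number*: the minimum cardinality of a global
offensive alliance which is also an independent set. -/
noncomputable def SimpleGraph.globalIndepOffensiveAllianceNum {V : Type*}
    (G : SimpleGraph V) : ℕ :=
  sInf {k | ∃ S : Set V,
    G.IsGlobalOffensiveAlliance S ∧ G.IsIndepVertexSet S ∧ S.ncard = k}

open Classical in
lemma aux_count {V : Type*} [Fintype V] (G : SimpleGraph V)
    (hcubic : ∀ v : V, (G.neighborSet v).ncard = 3) (S : Set V) (hS : G.IsIndepVertexSet S) :
    ∑ v ∈ Finset.univ.filter (fun v => v ∉ S), (G.neighborSet v ∩ S).ncard = 3 * S.ncard := by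
  have h := Finset.sum_card_bipartiteAbove_eq_sum_card_bipartiteBelow (r := G.Adj)
    (s := Finset.univ.filter (fun v => v ∉ S)) (t := Finset.univ.filter (fun v => v ∈ S))
  have h1 : ∀ v : V, (G.neighborSet v ∩ S).ncard =
      ((Finset.univ.filter (fun v => v ∈ S)).bipartiteAbove G.Adj v).card := by
    intro v
    rw [← Set.ncard_coe_finset]
    congr 1
    ext w
    simp [Finset.bipartiteAbove, and_comm]
  have h2 : ∀ v ∈ Finset.univ.filter (fun v => v ∈ S),
      ((Finset.univ.filter (fun v => v ∉ S)).bipartiteBelow G.Adj v).card = 3 := by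
    intro v hv
    have hv' : v ∈ S := by simpa using hv
    rw [← hcubic v, ← Set.ncard_coe_finset]
    congr 1
    ext w
    simp only [Finset.bipartiteBelow, Finset.coe_filter, Finset.mem_filter, Finset.mem_univ,
      true_and, Set.mem_ofPred_eq, SimpleGraph.mem_neighborSet]
    constructor
    · rintro ⟨_, h⟩
      exact h.symm
    · intro h
      exact ⟨fun hw => hS hv' hw h.ne h, h.symm⟩
  rw [Finset.sum_congr rfl (fun v _ => h1 v), h, Finset.sum_congr rfl h2, Finset.sum_const,
    smul_eq_mul, mul_comm]
  congr 1
  rw [← Set.ncard_coe_finset]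
  congr 1
  ext w
  simp

open Classical in
lemma aux_compl {V : Type*} [Fintype V] (S : Set V) :
    (Finset.univ.filter (fun v => v ∉ S)).card + S.ncard = Fintype.card V := by
  have h : S.ncard = (Finset.univ.filter (fun v => v ∈ S)).card := by
    rw [← Set.ncard_coe_finset]
    congr 1
    ext w
    simp
  rw [h, add_comm, Finset.card_filter_add_card_filter_not, Finset.card_univ]

lemma aux_split {V : Type*} [Fintype V] (G : SimpleGraph V)
    (hcubic : ∀ v : V, (G.neighborSet v).ncard = 3) (S : Set V) (v : V) :
    (G.neighborSet v ∩ S).ncard + (G.neighborSet v \ S).ncard = 3 := by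
  rw [Set.ncard_inter_add_ncard_sdiff_eq_ncard _ _ (Set.toFinite _), hcubic]

open Classical in
lemma aux_edges {V : Type*} [Fintype V] (G : SimpleGraph V) (X : Set V)
    (h : ∀ v ∉ X, (G.neighborSet v \ X).ncard = 1) :
    2 * {e : Sym2 V | e ∈ G.edgeSet ∧ ∀ v ∈ e, v ∉ X}.ncard + X.ncard = Fintype.card V := by
  let H : SimpleGraph V :=
    { Adj := fun a b => G.Adj a b ∧ a ∉ X ∧ b ∉ X
      symm := ⟨fun a b h => ⟨h.1.symm, h.2.2, h.2.1⟩⟩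
      loopless := ⟨fun a h => G.loopless.irrefl a h.1⟩ }
  have hs := H.sum_degrees_eq_twice_card_edges
  have he : {e : Sym2 V | e ∈ G.edgeSet ∧ ∀ v ∈ e, v ∉ X}.ncard = H.edgeFinset.card := by
    rw [← Set.ncard_coe_finset]
    congr 1
    ext e
    induction e with
    | _ a b => simp [H]
  have hd : ∀ v, H.degree v = if v ∉ X then 1 else 0 := by
    intro v
    rw [← SimpleGraph.card_neighborFinset_eq_degree, ← Set.ncard_coe_finset]
    by_cases hv : v ∉ X
    · rw [if_pos hv, ← h v hv]
      congr 1
      ext w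
      simp [H, hv]
    · rw [if_neg hv, Set.ncard_eq_zero]
      rw [not_not] at hv
      ext w
      simp [H, hv]
  rw [Finset.sum_congr rfl (fun v _ => hd v), ← Finset.card_filter] at hs
  rw [he, ← hs, aux_compl]

lemma aux_lower {V : Type*} [Fintype V] (G : SimpleGraph V)
    (hcubic : ∀ v : V, (G.neighborSet v).ncard = 3) (S : Set V) (hS : G.IsIndepVertexSet S)
    (hA : G.IsGlobalOffensiveAlliance S) : 2 * Fintype.card V ≤ 5 * S.ncard := by
  classical
  have h1 := aux_count G hcubic S hS
  have h2 := aux_compl S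
  have h3 := Finset.card_nsmul_le_sum (Finset.univ.filter (fun v => v ∉ S))
    (fun v => (G.neighborSet v ∩ S).ncard) 2 (by
      intro v hv
      have := hA.2 v (by simpa using hv)
      have := aux_split G hcubic S v
      omega)
  simp only [smul_eq_mul] at h3
  omega

theorem stmt_17 {V : Type*} [Fintype V] (G : SimpleGraph V)
    (hconn : G.Connected) (hcubic : ∀ v : V, (G.neighborSet v).ncard = 3)
    (hex : ∃ S : Set V, G.IsGlobalOffensiveAlliance S ∧ G.IsIndepVertexSet S) :
    (G.globalIndepOffensiveAllianceNum : ℝ) = 2 * Fintype.card V / 5 ↔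
      ∃ X : Set V, G.IsIndepVertexSet X ∧
        (∀ v ∉ X, (G.neighborSet v \ X).ncard = 1) ∧
        (({e : Sym2 V | e ∈ G.edgeSet ∧ ∀ v ∈ e, v ∉ X}.ncard : ℝ) =
          3 * Fintype.card V / 10) := by
  classical
  constructor
  · intro h
    have hne : {k | ∃ S : Set V,
        G.IsGlobalOffensiveAlliance S ∧ G.IsIndepVertexSet S ∧ S.ncard = k}.Nonempty := by
      obtain ⟨S, h1, h2⟩ := hex
      exact ⟨_, S, h1, h2, rfl⟩
    obtain ⟨S, hA, hI, hk⟩ := Nat.sInf_mem hne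
    have hk' : S.ncard = G.globalIndepOffensiveAllianceNum := hk
    rw [← hk'] at h
    have h5 : 5 * S.ncard = 2 * Fintype.card V := by
      have : (5 : ℝ) * S.ncard = 2 * Fintype.card V := by linarith
      exact_mod_cast this
    have h1 := aux_count G hcubic S hI
    have h2 := aux_compl S
    have hle : ∀ v ∈ Finset.univ.filter (fun v => v ∉ S), 2 ≤ (G.neighborSet v ∩ S).ncard := by
      intro v hv
      have := hA.2 v (by simpa using hv)
      have := aux_split G hcubic S v
      omega
    have heq := (Finset.sum_eq_sum_iff_of_le hle).1 (by
      rw [h1, Finset.sum_const, smul_eq_mul]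
      omega)
    have hone : ∀ v ∉ S, (G.neighborSet v \ S).ncard = 1 := by
      intro v hv
      have := heq v (by simpa using hv)
      have := aux_split G hcubic S v
      omega
    refine ⟨S, hI, hone, ?_⟩
    have h3 := aux_edges G S hone
    have h3' : (2 : ℝ) * ({e : Sym2 V | e ∈ G.edgeSet ∧ ∀ v ∈ e, v ∉ S}.ncard : ℝ) + S.ncard
        = Fintype.card V := by exact_mod_cast h3
    linarith
  · rintro ⟨X, hI, hone, -⟩
    have h1 := aux_count G hcubic X hI
    have h2 := aux_compl X
    have h3 : ∀ v ∉ X, (G.neighborSet v ∩ X).ncard = 2 := by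
      intro v hv
      have := hone v hv
      have := aux_split G hcubic X v
      omega
    rw [Finset.sum_congr rfl (fun v hv => h3 v (by simpa using hv)), Finset.sum_const,
      smul_eq_mul] at h1
    have hpos : 0 < Fintype.card V := Fintype.card_pos_iff.2 hconn.nonempty
    have hA : G.IsGlobalOffensiveAlliance X := by
      refine ⟨?_, fun v hv => by rw [hone v hv, h3 v hv]⟩
      apply Set.nonempty_of_ncard_ne_zero
      omega
    have hle : G.globalIndepOffensiveAllianceNum ≤ X.ncard := Nat.sInf_le ⟨X, hA, hI, rfl⟩
    have hmem : G.globalIndepOffensiveAllianceNum ∈ {k | ∃ S : Set V,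
        G.IsGlobalOffensiveAlliance S ∧ G.IsIndepVertexSet S ∧ S.ncard = k} :=
      Nat.sInf_mem ⟨_, X, hA, hI, rfl⟩
    obtain ⟨S, hSA, hSI, hk⟩ := hmem
    have h4 := aux_lower G hcubic S hSI hSA
    have h5 : 5 * G.globalIndepOffensiveAllianceNum = 2 * Fintype.card V := by omega
    have h6 : (5 : ℝ) * G.globalIndepOffensiveAllianceNum = 2 * Fintype.card V := by
      exact_mod_cast h5
    linarith
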